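/- Let r ≥ 2 and let n = 2^r or n = 2^r + 1. Then the set { f : Fin n → ℕ | ∃ a b : ℕ, (∀ i : Fin n, T(a+i) = f i ∧ T(b+i) = f i) ∧ ¬SamePerm (n+1) a b } has cardinality (Set.ncard) exactly 2^r; i.e., there are exactly 2^r factors u of the Thue–Morse word of length n admitting two distinct subpermutations of π_T of length n+1 with form u. -/

import Mathlib

/-!
The Thue–Morse word is fixed by `0 ↦ 01`, `1 ↦ 10`, that is, `T (2k) = T k` and
`T (2k+1) = 1 - T k`. This makes the order `≺` compatible with halving positions:

* `2x ≺ 2y ↔ x ≺ y`, and `2x+1 ≺ 2y+1 ↔ x ≺ y` when `T x = T y`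
  (`prec_double`, `prec_odd_iff`);
* an odd and an even position are compared by the letter at the odd one alone
  (`prec_mixed_iff`), because `T` contains neither `000` nor `111`.

Four consecutive letters determine the parity of the position where they occur (`parity_eq`).
Hence, if two occurrences `a`, `b` of a factor of length `n ≥ 4` carry different subpermutations
of length `n+1`, then so do `a/2`, `b/2` for the desubstituted factor (`descent`). Lengths `2^(r+1)`
and `2^(r+1)+1` desubstitute to lengths `2^r` and `2^r+1`, so the induction goes down to lengths
`2` and `3`, where only the alternating words survive. Running it backwards shows that the factors
in question are exactly `T[p, p+n-1]` with `2^r ≤ p < 2^(r+1)`: `bad_imp` is one inclusion, and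
`exists_partner` lifts, for each such `p`, a second occurrence `b` which compares its ends
`b`, `b + 2^r` in the opposite way. The same desubstitution proves that these `2^r` factors are
distinct (`window_inj`).
-/

/-- The Thue-Morse word: parity of the binary digit sum. -/
def TM (n : ℕ) : ℕ := (Nat.digits 2 n).sum % 2

/-- `Prec a b` : the shift of the Thue-Morse word at `a` is lexicographically
smaller than the shift at `b`. -/
def Prec (a b : ℕ) : Prop :=
  ∃ c : ℕ, (∀ i < c, TM (a + i) = TM (b + i)) ∧ TM (a + c) < TM (b + c)

/-- The subpermutations of `π_T` of length `N` starting at `a` and `b` coincide. -/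
def SamePerm (N a b : ℕ) : Prop :=
  ∀ i < N, ∀ j < N, (Prec (a + i) (a + j) ↔ Prec (b + i) (b + j))

open scoped Classical in
/-- `P a N i` : the 0-indexed rank of position `a+i` within the subpermutation
`π_T[a, a+N-1]`. -/
noncomputable def P (a N i : ℕ) : ℕ :=
  ((Finset.range N).filter (fun j => Prec (a + j) (a + i))).card

/-- The subpermutations `π_T[a,a+N-1]` and `π_T[b,b+N-1]` have the same form. -/
def SameForm (N a b : ℕ) : Prop :=
  ∀ i < N - 1, (Prec (a + i) (a + (i + 1))) ↔ (Prec (b + i) (b + (i + 1)))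

/-- The subpermutation `π_T[a,a+N-1]` is of type `k`. -/
def TypeK (k N a : ℕ) : Prop :=
  1 ≤ k ∧ 2 * k ≤ N ∧
  ∃ ε : ℤ, (ε = 1 ∨ ε = -1) ∧
    ∀ i < k, (P a N i : ℤ) = P a N (N - k + i) + ε

/-- Positions `a` and `b` form a complementary pair of type `k` of length `N`. -/
def CompPair (k N a b : ℕ) : Prop :=
  1 ≤ k ∧ 2 * k ≤ N ∧
  ∃ ε : ℤ, (ε = 1 ∨ ε = -1) ∧
    (∀ i < k,
      (P a N i : ℤ) = P a N (N - k + i) + ε ∧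
      (P b N i : ℤ) = P a N (N - k + i) ∧
      (P b N (N - k + i) : ℤ) = P a N i) ∧
    (∀ j, k ≤ j → j < N - k → P b N j = P a N j)

/-- The permutation complexity of the Thue-Morse word: the number of distinct
subpermutations of `π_T` of length `N`. -/
noncomputable def tau (N : ℕ) : ℕ :=
  Set.ncard (Set.range (fun a : ℕ => fun i j : Fin N => Prec (a + i) (a + j)))

/-! ### The substitution and the absence of cubes -/

lemma TM_lt (n : ℕ) : TM n < 2 := Nat.mod_lt _ (by norm_num)

lemma TM_even (n : ℕ) : TM (2 * n) = TM n := by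
  rcases Nat.eq_zero_or_pos n with rfl | h
  · rfl
  · simp only [TM]
    rw [Nat.digits_def' (by norm_num) (by omega)]
    simp

lemma TM_odd (n : ℕ) : TM (2 * n + 1) = 1 - TM n := by
  simp only [TM]
  rw [Nat.digits_def' (by norm_num) (by omega)]
  have h1 : (2 * n + 1) % 2 = 1 := by omega
  have h2 : (2 * n + 1) / 2 = n := by omega
  rw [h1, h2, List.sum_cons]
  omega

lemma TM_no_cube (x : ℕ) (h1 : TM x = TM (x + 1)) (h2 : TM (x + 1) = TM (x + 2)) : False := by
  rcases Nat.even_or_odd' x with ⟨k, rfl | rfl⟩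
  · have := TM_even k
    have := TM_odd k
    have := TM_lt k
    omega
  · have e1 := TM_even (k + 1)
    have e2 := TM_odd (k + 1)
    have := TM_lt (k + 1)
    rw [show 2 * (k + 1) = 2 * k + 1 + 1 by ring] at e1
    rw [show 2 * (k + 1) + 1 = 2 * k + 1 + 2 by ring] at e2
    omega

/-- Consecutive equal letters only occur at an odd position. -/
lemma odd_of_eq_succ {a : ℕ} (h : TM a = TM (a + 1)) : a % 2 = 1 := by
  by_contra h2
  obtain ⟨k, rfl⟩ : ∃ k, a = 2 * k := ⟨a / 2, by omega⟩
  have := TM_even k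
  have := TM_odd k
  have := TM_lt k
  omega

/-- A word of length four cannot occur at both an even and an odd position. -/
lemma parity_aux (x y : ℕ) (h : ∀ i < 4, TM (2 * x + i) = TM (2 * y + 1 + i)) : False := by
  have h0 := h 0 (by norm_num)
  have h1 := h 1 (by norm_num)
  have h2 := h 2 (by norm_num)
  have h3 := h 3 (by norm_num)
  rw [show 2 * x + 0 = 2 * x by ring, show 2 * y + 1 + 0 = 2 * y + 1 by ring,
    TM_even, TM_odd] at h0
  rw [show 2 * y + 1 + 1 = 2 * (y + 1) by ring, TM_even, TM_odd] at h1
  rw [show 2 * x + 2 = 2 * (x + 1) by ring, show 2 * y + 1 + 2 = 2 * (y + 1) + 1 by ring,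
    TM_even, TM_odd] at h2
  rw [show 2 * x + 3 = 2 * (x + 1) + 1 by ring, show 2 * y + 1 + 3 = 2 * (y + 2) by ring,
    TM_even, TM_odd] at h3
  have := TM_lt x
  have := TM_lt y
  have := TM_lt (x + 1)
  have := TM_lt (y + 1)
  exact TM_no_cube y (by omega) (by omega)

lemma parity_eq {a b : ℕ} (h : ∀ i < 4, TM (a + i) = TM (b + i)) : a % 2 = b % 2 := by
  by_contra hne
  rcases Nat.even_or_odd' a with ⟨x, rfl | rfl⟩ <;> rcases Nat.even_or_odd' b with ⟨y, rfl | rfl⟩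
  · omega
  · exact parity_aux x y h
  · exact parity_aux y x fun i hi => (h i hi).symm
  · omega

/-! ### The order of shifts under halving -/

lemma Prec.asymm {x y : ℕ} (h : Prec x y) : ¬ Prec y x := by
  rintro ⟨d, hd, hd'⟩
  obtain ⟨c, hc, hc'⟩ := h
  rcases lt_trichotomy c d with hl | rfl | hl
  · have := hd c hl
    omega
  · omega
  · have := hc d hl
    omega

lemma prec_of_lt {x y : ℕ} (h : TM x < TM y) : Prec x y :=
  ⟨0, fun i hi => absurd hi (Nat.not_lt_zero i), h⟩

lemma prec_double (x y : ℕ) : Prec (2 * x) (2 * y) ↔ Prec x y := by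
  constructor
  · rintro ⟨c, hc, hlt⟩
    rcases Nat.even_or_odd' c with ⟨k, rfl | rfl⟩
    · refine ⟨k, fun i hi => ?_, ?_⟩
      · have := hc (2 * i) (by omega)
        rwa [← mul_add, ← mul_add, TM_even, TM_even] at this
      · rwa [← mul_add, ← mul_add, TM_even, TM_even] at hlt
    · exfalso
      have := hc (2 * k) (by omega)
      rw [← mul_add, ← mul_add, TM_even, TM_even] at this
      rw [← add_assoc, ← add_assoc, ← mul_add, ← mul_add, TM_odd, TM_odd] at hlt
      omega
  · rintro ⟨c, hc, hlt⟩
    refine ⟨2 * c, fun i hi => ?_, ?_⟩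
    · rcases Nat.even_or_odd' i with ⟨k, rfl | rfl⟩
      · rw [← mul_add, ← mul_add, TM_even, TM_even]
        exact hc k (by omega)
      · rw [← add_assoc, ← add_assoc, ← mul_add, ← mul_add, TM_odd, TM_odd, hc k (by omega)]
    · rwa [← mul_add, ← mul_add, TM_even, TM_even]

lemma prec_odd_iff {x y : ℕ} (h : TM x = TM y) :
    Prec (2 * x + 1) (2 * y + 1) ↔ Prec x y := by
  rw [← prec_double x y]
  have h0 : TM (2 * x) = TM (2 * y) := by rw [TM_even, TM_even, h]
  constructor
  · rintro ⟨c, hc, hlt⟩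
    refine ⟨c + 1, fun i hi => ?_, ?_⟩
    · rcases i with _ | i
      · exact h0
      · have := hc i (by omega)
        rwa [show 2 * x + (i + 1) = 2 * x + 1 + i by ring,
          show 2 * y + (i + 1) = 2 * y + 1 + i by ring]
    · rwa [show 2 * x + (c + 1) = 2 * x + 1 + c by ring,
        show 2 * y + (c + 1) = 2 * y + 1 + c by ring]
  · rintro ⟨c, hc, hlt⟩
    rcases c with _ | c
    · exact absurd hlt (by simpa using h0.not_lt)
    · refine ⟨c, fun i hi => ?_, ?_⟩
      · have := hc (i + 1) (by omega)
        rwa [show 2 * x + (i + 1) = 2 * x + 1 + i by ring,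
          show 2 * y + (i + 1) = 2 * y + 1 + i by ring] at this
      · rwa [show 2 * x + (c + 1) = 2 * x + 1 + c by ring,
          show 2 * y + (c + 1) = 2 * y + 1 + c by ring] at hlt

lemma prec_odd_iff_of_ne {x y : ℕ} (h : TM x ≠ TM y) :
    Prec (2 * x + 1) (2 * y + 1) ↔ TM y < TM x := by
  have hx := TM_odd x
  have hy := TM_odd y
  have := TM_lt x
  have := TM_lt y
  constructor
  · intro hp
    by_contra hlt
    exact hp.asymm (prec_of_lt (by omega))
  · intro hlt
    exact prec_of_lt (by omega)

/-- A shift starting with `1` at an odd position exceeds every shift at an even position: after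
the `1` comes a word in the blocks `01`, `10` which, if it starts with `01`, continues with `1`
(no cubes), whereas an even shift starts with at most `1010`. -/
lemma even_prec_odd {x y : ℕ} (h : TM x = 0) : Prec (2 * y) (2 * x + 1) := by
  have x0 := TM_odd x
  have x1 := TM_even (x + 1)
  have x2 := TM_odd (x + 1)
  have x3 := TM_even (x + 2)
  have y0 := TM_even y
  have y1 := TM_odd y
  have y2 := TM_even (y + 1)
  have y3 := TM_odd (y + 1)
  have := TM_lt (x + 1)
  have := TM_lt (x + 2)
  have := TM_lt y
  have := TM_lt (y + 1)
  have hcube := TM_no_cube x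
  rw [show 2 * (x + 1) = 2 * x + 1 + 1 by ring] at x1
  rw [show 2 * (x + 1) + 1 = 2 * x + 1 + 2 by ring] at x2
  rw [show 2 * (x + 2) = 2 * x + 1 + 3 by ring] at x3
  rw [show 2 * (y + 1) = 2 * y + 2 by ring] at y2
  rw [show 2 * (y + 1) + 1 = 2 * y + 3 by ring] at y3
  by_cases c0 : TM y = 0
  · exact prec_of_lt (by omega)
  by_cases c1 : TM (x + 1) = 1
  · refine ⟨1, fun i hi => ?_, by omega⟩
    interval_cases i
    simp only [add_zero]
    omega
  by_cases c2 : TM (y + 1) = 0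
  · refine ⟨2, fun i hi => ?_, by omega⟩
    interval_cases i
    · simp only [add_zero]
      omega
    · omega
  · have c3 : TM (x + 2) = 1 := by
      by_contra hne
      exact hcube (by omega) (by omega)
    refine ⟨3, fun i hi => ?_, by omega⟩
    interval_cases i
    · simp only [add_zero]
      omega
    · omega
    · omega

/-- The mirror image of `even_prec_odd` under exchanging the two letters. -/
lemma odd_prec_even {x y : ℕ} (h : TM x = 1) : Prec (2 * x + 1) (2 * y) := by
  have x0 := TM_odd x
  have x1 := TM_even (x + 1)
  have x2 := TM_odd (x + 1)
  have x3 := TM_even (x + 2)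
  have y0 := TM_even y
  have y1 := TM_odd y
  have y2 := TM_even (y + 1)
  have y3 := TM_odd (y + 1)
  have := TM_lt (x + 1)
  have := TM_lt (x + 2)
  have := TM_lt y
  have := TM_lt (y + 1)
  have hcube := TM_no_cube x
  rw [show 2 * (x + 1) = 2 * x + 1 + 1 by ring] at x1
  rw [show 2 * (x + 1) + 1 = 2 * x + 1 + 2 by ring] at x2
  rw [show 2 * (x + 2) = 2 * x + 1 + 3 by ring] at x3
  rw [show 2 * (y + 1) = 2 * y + 2 by ring] at y2
  rw [show 2 * (y + 1) + 1 = 2 * y + 3 by ring] at y3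
  by_cases c0 : TM y = 1
  · exact prec_of_lt (by omega)
  by_cases c1 : TM (x + 1) = 0
  · refine ⟨1, fun i hi => ?_, by omega⟩
    interval_cases i
    simp only [add_zero]
    omega
  by_cases c2 : TM (y + 1) = 1
  · refine ⟨2, fun i hi => ?_, by omega⟩
    interval_cases i
    · simp only [add_zero]
      omega
    · omega
  · have c3 : TM (x + 2) = 0 := by
      by_contra hne
      exact hcube (by omega) (by omega)
    refine ⟨3, fun i hi => ?_, by omega⟩
    interval_cases i
    · simp only [add_zero]
      omega
    · omega
    · omega

/-- Odd and even positions are compared by the letter at the odd one. -/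
lemma prec_mixed_iff (x y : ℕ) : Prec (2 * x + 1) (2 * y) ↔ TM x = 1 := by
  refine ⟨fun hp => ?_, odd_prec_even⟩
  by_contra h
  have := TM_lt x
  exact hp.asymm (even_prec_odd (by omega))

lemma prec_mixed_iff' (x y : ℕ) : Prec (2 * y) (2 * x + 1) ↔ TM x = 0 := by
  refine ⟨fun hp => ?_, even_prec_odd⟩
  by_contra h
  have := TM_lt x
  exact hp.asymm (odd_prec_even (by omega))

/-- Neighbouring positions are compared by the letter at the first one. -/
lemma prec_succ_iff (x : ℕ) : Prec x (x + 1) ↔ TM x = 0 := by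
  rcases Nat.even_or_odd' x with ⟨k, rfl | rfl⟩
  · rw [prec_mixed_iff', TM_even]
  · rw [show 2 * k + 1 + 1 = 2 * (k + 1) by ring, prec_mixed_iff, TM_odd]
    have := TM_lt k
    omega

lemma succ_prec_iff (x : ℕ) : Prec (x + 1) x ↔ TM x = 1 := by
  rcases Nat.even_or_odd' x with ⟨k, rfl | rfl⟩
  · rw [prec_mixed_iff, TM_even]
  · rw [show 2 * k + 1 + 1 = 2 * (k + 1) by ring, prec_mixed_iff', TM_odd]
    have := TM_lt k
    omega

lemma not_prec_self (x : ℕ) : ¬ Prec x x := fun h => h.asymm h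

/-! ### Desubstitution -/

/-- A common factor of length `n` at `2x+e`, `2y+e` desubstitutes to a common factor at `x`, `y`,
of length `(e+n+1)/2`. -/
lemma letters_half {x y e n : ℕ} (he : e < 2)
    (hn : 1 ≤ n) (h : ∀ i < n, TM (2 * x + e + i) = TM (2 * y + e + i)) :
    ∀ t, 2 * t < e + n → TM (x + t) = TM (y + t) := by
  intro t ht
  by_cases hc : e ≤ 2 * t
  · have := h (2 * t - e) (by omega)
    rwa [show 2 * x + e + (2 * t - e) = 2 * (x + t) by omega,
      show 2 * y + e + (2 * t - e) = 2 * (y + t) by omega, TM_even, TM_even] at this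
  · have := h 0 (by omega)
    rw [show 2 * x + e + 0 = 2 * (x + t) + 1 by omega,
      show 2 * y + e + 0 = 2 * (y + t) + 1 by omega, TM_odd, TM_odd] at this
    have := TM_lt (x + t)
    have := TM_lt (y + t)
    omega

lemma letters_lift {x y e n : ℕ}
    (h : ∀ t, 2 * t < e + n → TM (x + t) = TM (y + t)) :
    ∀ i < n, TM (2 * x + e + i) = TM (2 * y + e + i) := by
  intro i hi
  rcases Nat.even_or_odd' (e + i) with ⟨k, hk | hk⟩
  · rw [add_assoc, add_assoc, hk, ← mul_add, ← mul_add, TM_even, TM_even, h k (by omega)]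
  · rw [add_assoc, add_assoc, hk, ← add_assoc, ← add_assoc, ← mul_add, ← mul_add, TM_odd, TM_odd,
      h k (by omega)]

/-- A pair of positions on which the subpermutations at `2x+e` and `2y+e` disagree halves to such a
pair for `x` and `y`. The last clause records which positions the halves may come from:
either both original positions are even, or both are odd and carry the same letter. -/
lemma descent {x y e n : ℕ} (he : e < 2) (hn : 1 ≤ n)
    (h : ∀ i < n, TM (2 * x + e + i) = TM (2 * y + e + i))
    (hs : ¬ SamePerm (n + 1) (2 * x + e) (2 * y + e)) :
    ∃ i j, ¬ (Prec (x + i) (x + j) ↔ Prec (y + i) (y + j)) ∧ 2 * i ≤ e + n ∧ 2 * j ≤ e + n ∧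
      ((e ≤ 2 * i ∧ e ≤ 2 * j) ∨
        (TM (x + i) = TM (x + j) ∧ 2 * i + 1 ≤ e + n ∧ 2 * j + 1 ≤ e + n)) := by
  have hl := letters_half he hn h
  simp only [SamePerm, not_forall] at hs
  obtain ⟨i, hi, j, hj, hij⟩ := hs
  rw [add_assoc, add_assoc, add_assoc, add_assoc] at hij
  rcases Nat.even_or_odd' (e + i) with ⟨k, hk | hk⟩ <;>
    rcases Nat.even_or_odd' (e + j) with ⟨l, hl' | hl'⟩
  · rw [hk, hl', ← mul_add, ← mul_add, ← mul_add, ← mul_add, prec_double, prec_double] at hij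
    exact ⟨k, l, hij, by omega, by omega, by omega⟩
  · rw [hk, hl', ← add_assoc, ← add_assoc, ← mul_add, ← mul_add, ← mul_add, ← mul_add,
      prec_mixed_iff', prec_mixed_iff', hl l (by omega)] at hij
    exact absurd Iff.rfl hij
  · rw [hk, hl', ← add_assoc, ← add_assoc, ← mul_add, ← mul_add, ← mul_add, ← mul_add,
      prec_mixed_iff, prec_mixed_iff, hl k (by omega)] at hij
    exact absurd Iff.rfl hij
  · rw [hk, hl', ← add_assoc, ← add_assoc, ← add_assoc, ← add_assoc, ← mul_add, ← mul_add,
      ← mul_add, ← mul_add] at hij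
    have e1 := hl k (by omega)
    have e2 := hl l (by omega)
    by_cases heq : TM (x + k) = TM (x + l)
    · rw [prec_odd_iff heq, prec_odd_iff (by rw [← e1, ← e2, heq])] at hij
      exact ⟨k, l, hij, by omega, by omega, Or.inr ⟨heq, by omega, by omega⟩⟩
    · rw [prec_odd_iff_of_ne heq, prec_odd_iff_of_ne (by rwa [← e1, ← e2]), e1, e2] at hij
      exact absurd Iff.rfl hij

/-! ### Factors with two subpermutations -/

/-- Words of length two or three with two subpermutations alternate. -/
lemma base_alt {a b n : ℕ} (hn : n = 2 ∨ n = 3)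
    (h : ∀ i < n, TM (a + i) = TM (b + i)) (hs : ¬ SamePerm (n + 1) a b) :
    TM a ≠ TM (a + 1) ∧ (n = 3 → TM (a + 1) ≠ TM (a + 2)) := by
  have h0 := h 0 (by omega)
  have h1 := h 1 (by omega)
  simp only [add_zero] at h0
  -- After halving, only the first letter of a pair of neighbours, or equality of positions,
  -- matters, and that letter is known from the given factor.
  have key : ∀ e < 2, a % 2 = e → b % 2 = e → (e = 1 ∨ n = 3) →
      (e = 1 → TM a = TM (a + 1)) → False := by
    intro e he ha hb hen hlet
    obtain ⟨x, rfl⟩ : ∃ x, a = 2 * x + e := ⟨a / 2, by omega⟩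
    obtain ⟨y, rfl⟩ : ∃ y, b = 2 * y + e := ⟨b / 2, by omega⟩
    have hl := letters_half he (by omega) h
    obtain ⟨i, j, hij, hi, hj, hor⟩ := descent he (by omega) h hs
    have l0 := hl 0 (by omega)
    have l1 := hl 1 (by omega)
    -- For `e = 1` the equal letters of `a`, `a+1` straddle two blocks, which hence differ.
    have hx : e = 1 → TM x ≠ TM (x + 1) := by
      intro he1
      have := hlet he1
      rw [he1, show 2 * x + 1 + 1 = 2 * (x + 1) by ring, TM_odd, TM_even] at this
      have := TM_lt x
      have := TM_lt (x + 1)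
      omega
    have hi2 : i ≤ 2 := by omega
    have hj2 : j ≤ 2 := by omega
    have p0 := prec_succ_iff x
    have p1 := prec_succ_iff y
    have p2 := succ_prec_iff x
    have p3 := succ_prec_iff y
    have p4 := prec_succ_iff (x + 1)
    have p5 := prec_succ_iff (y + 1)
    have p6 := succ_prec_iff (x + 1)
    have p7 := succ_prec_iff (y + 1)
    have q := not_prec_self
    simp only [add_zero] at l0
    rw [add_assoc] at p4 p5 p6 p7
    norm_num at p4 p5 p6 p7
    interval_cases i <;> interval_cases j <;> try simp only [add_zero] at hij hor
    all_goals
      first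
        | omega
        | (simp only [q, p0, p1, p2, p3, p4, p5, p6, p7, l0, l1, not_true] at hij)
  refine ⟨fun heq => ?_, fun h3 heq => ?_⟩
  · exact key 1 (by norm_num) (odd_of_eq_succ heq) (odd_of_eq_succ (by omega)) (Or.inl rfl)
      fun _ => heq
  · have h2 := h 2 (by omega)
    have ha : (a + 1) % 2 = 1 := odd_of_eq_succ heq
    have hb : (b + 1) % 2 = 1 := odd_of_eq_succ (by rw [add_assoc]; norm_num; omega)
    exact key 0 (by norm_num) (by omega) (by omega) (Or.inr h3) (by omega)

/-- A factor with two subpermutations occurs at a position `p` with `2^r ≤ p < 2^(r+1)`. -/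
lemma bad_imp (r : ℕ) (hr : 1 ≤ r) : ∀ n a b : ℕ, (n = 2 ^ r ∨ n = 2 ^ r + 1) →
    (∀ i < n, TM (a + i) = TM (b + i)) → ¬ SamePerm (n + 1) a b →
    ∃ p, 2 ^ r ≤ p ∧ p < 2 ^ (r + 1) ∧ ∀ i < n, TM (a + i) = TM (p + i) := by
  induction r, hr using Nat.le_induction with
  | base =>
    intro n a b hn h hs
    obtain ⟨hb1, hb2⟩ := base_alt (by omega) h hs
    have a0 := TM_lt a
    have a1 := TM_lt (a + 1)
    have a2 := TM_lt (a + 2)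
    have t2 : TM 2 = 1 := by simp [TM]
    have t3 : TM 3 = 0 := by simp [TM]
    have t4 : TM 4 = 1 := by simp [TM]
    have t5 : TM 5 = 0 := by simp [TM]
    by_cases h0 : TM a = 1
    · refine ⟨2, by norm_num, by norm_num, fun i hi => ?_⟩
      have : i < 3 := by omega
      interval_cases i <;> norm_num <;> omega
    · refine ⟨3, by norm_num, by norm_num, fun i hi => ?_⟩
      have : i < 3 := by omega
      interval_cases i <;> norm_num <;> omega
  | succ r hr ih =>
    intro n a b hn h hs
    have hp : 2 ^ (r + 1) = 2 * 2 ^ r := by ring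
    have hp' : 2 ^ (r + 1 + 1) = 2 * 2 ^ (r + 1) := by ring
    have hp1 : 2 ^ 1 ≤ 2 ^ r := Nat.pow_le_pow_right (by norm_num) hr
    have hpar : a % 2 = b % 2 := parity_eq fun i hi => h i (by omega)
    obtain ⟨e, he, x, rfl⟩ : ∃ e < 2, ∃ x, a = 2 * x + e := ⟨a % 2, by omega, a / 2, by omega⟩
    obtain ⟨y, rfl⟩ : ∃ y, b = 2 * y + e := ⟨b / 2, by omega⟩
    have hl := letters_half he (by omega) h
    obtain ⟨i, j, hij, hi, hj, -⟩ := descent he (by omega) h hs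
    have hs' : ¬ SamePerm ((e + n + 1) / 2 + 1) x y := fun hsame =>
      hij (hsame i (by omega) j (by omega))
    obtain ⟨p, hp1, hp2, hpl⟩ := ih ((e + n + 1) / 2) x y (by omega)
      (fun t ht => hl t (by omega)) hs'
    exact ⟨2 * p + e, by omega, by omega, letters_lift fun t ht => hpl t (by omega)⟩

/-- Each position `p` with `2^r ≤ p < 2^(r+1)` has a partner `b` carrying the same factor of length
`2^r+1` but ordering its end positions oppositely. The equality of the end letters serves to
lift the comparison to odd positions. -/
lemma exists_partner (r : ℕ) (hr : 1 ≤ r) : ∀ p, 2 ^ r ≤ p → p < 2 ^ (r + 1) →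
    ∃ b, (∀ i < 2 ^ r + 1, TM (p + i) = TM (b + i)) ∧ TM p = TM (p + 2 ^ r) ∧
      ¬ (Prec p (p + 2 ^ r) ↔ Prec b (b + 2 ^ r)) := by
  induction r, hr using Nat.le_induction with
  | base =>
    intro p h1 h2
    have hp : p = 2 ∨ p = 3 := by omega
    rcases hp with rfl | rfl
    · -- `T[2..] = 10100…` and `T[11..] = 1011…`
      refine ⟨11, fun i hi => ?_, by simp [TM], fun hiff => ?_⟩
      · have : i < 3 := by omega
        interval_cases i <;> simp [TM]
      · have p1 : Prec 4 2 := ⟨2, fun i hi => by interval_cases i <;> simp [TM], by simp [TM]⟩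
        have p2 : Prec 11 13 := ⟨1, fun i hi => by interval_cases i; simp [TM], by simp [TM]⟩
        exact p1.asymm (hiff.2 p2)
    · -- `T[3..] = 0100…` and `T[10..] = 01011…`
      refine ⟨10, fun i hi => ?_, by simp [TM], fun hiff => ?_⟩
      · have : i < 3 := by omega
        interval_cases i <;> simp [TM]
      · have p1 : Prec 5 3 := ⟨1, fun i hi => by interval_cases i; simp [TM], by simp [TM]⟩
        have p2 : Prec 10 12 := ⟨2, fun i hi => by interval_cases i <;> simp [TM], by simp [TM]⟩
        exact p1.asymm (hiff.2 p2)
  | succ r hr ih =>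
    intro p h1 h2
    have hp : 2 ^ (r + 1) = 2 * 2 ^ r := by ring
    have hp' : 2 ^ (r + 1 + 1) = 2 * 2 ^ (r + 1) := by ring
    obtain ⟨e, he, x, rfl⟩ : ∃ e < 2, ∃ x, p = 2 * x + e := ⟨p % 2, by omega, p / 2, by omega⟩
    obtain ⟨b, hb, heq, hiff⟩ := ih x (by omega) (by omega)
    have heqb : TM b = TM (b + 2 ^ r) := by
      have := hb 0 (by omega)
      have := hb (2 ^ r) (by omega)
      simp only [add_zero] at *
      omega
    refine ⟨2 * b + e, letters_lift fun t ht => hb t (by omega), ?_, ?_⟩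
    · rw [hp, show 2 * x + e + 2 * 2 ^ r = 2 * (x + 2 ^ r) + e by ring]
      have := letters_lift (x := x) (y := x + 2 ^ r) (e := e) (n := 1)
        (fun t ht => by obtain rfl : t = 0 := by omega
                        exact heq) 0 (by omega)
      exact this
    · rw [hp, show 2 * x + e + 2 * 2 ^ r = 2 * (x + 2 ^ r) + e by ring,
        show 2 * b + e + 2 * 2 ^ r = 2 * (b + 2 ^ r) + e by ring]
      interval_cases e
      · simpa only [add_zero, prec_double] using hiff
      · rwa [prec_odd_iff heq, prec_odd_iff heqb]

/-- The factors of length `2^r` at the positions `2^r ≤ p < 2^(r+1)` are distinct. -/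
lemma window_inj (r : ℕ) (hr : 1 ≤ r) : ∀ p q, 2 ^ r ≤ p → p < 2 ^ (r + 1) → 2 ^ r ≤ q →
    q < 2 ^ (r + 1) → (∀ i < 2 ^ r, TM (p + i) = TM (q + i)) → p = q := by
  induction r, hr using Nat.le_induction with
  | base =>
    intro p q h1 h2 h3 h4 h
    have h0 := h 0 (by norm_num)
    have t2 : TM 2 = 1 := by simp [TM]
    have t3 : TM 3 = 0 := by simp [TM]
    have hp : p = 2 ∨ p = 3 := by omega
    have hq : q = 2 ∨ q = 3 := by omega
    rcases hp with rfl | rfl <;> rcases hq with rfl | rfl <;> simp [t2, t3] at h0 ⊢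
  | succ r hr ih =>
    intro p q h1 h2 h3 h4 h
    have hp : 2 ^ (r + 1) = 2 * 2 ^ r := by ring
    have hp' : 2 ^ (r + 1 + 1) = 2 * 2 ^ (r + 1) := by ring
    have hp1 : 2 ^ 1 ≤ 2 ^ r := Nat.pow_le_pow_right (by norm_num) hr
    have hpar : p % 2 = q % 2 := parity_eq fun i hi => h i (by omega)
    obtain ⟨e, he, x, rfl⟩ : ∃ e < 2, ∃ x, p = 2 * x + e := ⟨p % 2, by omega, p / 2, by omega⟩
    obtain ⟨y, rfl⟩ : ∃ y, q = 2 * y + e := ⟨q / 2, by omega⟩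
    have hl := letters_half he (by omega) h
    have := ih x y (by omega) (by omega) (by omega) (by omega)
      fun t ht => hl t (by omega)
    rw [this]

/-- For `n = 2^r` or `n = 2^r + 1` with `r ≥ 2`, there are exactly `2^r` factors
of the Thue-Morse word of length `n` admitting two distinct subpermutations of
`π_T` of length `n+1` with that form. -/
theorem count_factors_with_two_subperms (r n : ℕ) (hr : 2 ≤ r)
    (hn : n = 2 ^ r ∨ n = 2 ^ r + 1) :
    Set.ncard { f : Fin n → ℕ |
      ∃ a b : ℕ, (∀ i : Fin n, TM (a + i) = f i ∧ TM (b + i) = f i) ∧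
        ¬SamePerm (n + 1) a b } = 2 ^ r := by
  have hset : { f : Fin n → ℕ |
      ∃ a b : ℕ, (∀ i : Fin n, TM (a + i) = f i ∧ TM (b + i) = f i) ∧
        ¬SamePerm (n + 1) a b } =
      Set.image (fun p : ℕ => fun i : Fin n => TM (p + i))
        (Finset.Ico (2 ^ r) (2 ^ (r + 1)) : Set ℕ) := by
    ext f
    simp only [Set.mem_ofPred_eq, Set.mem_image, Finset.coe_Ico, Set.mem_Ico]
    constructor
    · rintro ⟨a, b, h, hs⟩
      obtain ⟨p, h1, h2, h3⟩ := bad_imp r (by omega) n a b hn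
        (fun i hi => (h ⟨i, hi⟩).1.trans (h ⟨i, hi⟩).2.symm) hs
      exact ⟨p, ⟨h1, h2⟩, funext fun i => (h3 i i.2).symm.trans (h i).1⟩
    · rintro ⟨p, ⟨h1, h2⟩, rfl⟩
      obtain ⟨b, hb, -, hiff⟩ := exists_partner r (by omega) p h1 h2
      exact ⟨p, b, fun i => ⟨rfl, (hb i (by omega)).symm⟩, fun hs =>
        hiff (hs 0 (by omega) (2 ^ r) (by omega))⟩
  rw [hset, Set.InjOn.ncard_image, Set.ncard_coe_finset, Nat.card_Ico]
  · rw [pow_succ]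
    omega
  · intro p hp q hq hpq
    simp only [Finset.coe_Ico, Set.mem_Ico] at hp hq
    exact window_inj r (by omega) p q hp.1 hp.2 hq.1 hq.2 fun i hi =>
      congrFun hpq ⟨i, by omega⟩
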